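/- arXiv:1710.01817 — 2 statements merged into one kernel-verified Lean document; each statement's English description precedes it below -/
import Mathlib

section
/- Let R be a commutative ring with an anti-involution α, let B = R^α/N(R) be the quotient commutative ring, and let T = B ⊗_ℤ B, a commutative ring. Let I ⊆ T be the additive subgroup generated by all elements [α(s)·r·s] ⊗ [t] − [r] ⊗ [s·t·α(s)] with s ∈ R and r, t ∈ R^α (here [a] denotes the class in B of an element a ∈ R^α), and let J ⊆ T be the ideal generated by the elements [r·α(r)] ⊗ [1] − [1] ⊗ [r·α(r)] with r ∈ R. Then I = J; in particular the subgroup I is an ideal of T. -/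
open TensorProduct

/-- Let `R` be a commutative ring with an anti-involution `α`, let
`S = R^α` be the subring of fixed points, `NI ⊆ S` the ideal given by the image of the norm map
`N r = r + α r`, and `B = S ⧸ NI` the quotient commutative ring.  In `T = B ⊗[ℤ] B`, the additive
subgroup generated by the elements `[α s * r * s] ⊗ [t] - [r] ⊗ [s * t * α s]` (for `s ∈ R`,
`r, t ∈ R^α`) equals the ideal generated by the elements `[r * α r] ⊗ [1] - [1] ⊗ [r * α r]`
(for `r ∈ R`); in particular that additive subgroup is an ideal of `T`. -/
theorem relations_subgroup_eq_ideal {R : Type*} [CommRing R] (α : R → R)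
    (hadd : ∀ x y : R, α (x + y) = α x + α y)
    (hmul : ∀ x y : R, α (x * y) = α y * α x)
    (hone : α 1 = 1)
    (hinv : ∀ x : R, α (α x) = x)
    (S : Subring R) (hS : ∀ x : R, x ∈ S ↔ α x = x)
    (NI : Ideal S) (hNI : ∀ x : S, x ∈ NI ↔ ∃ r : R, r + α r = (x : R)) :
    SetLike.coe (AddSubgroup.closure
        {z : (S ⧸ NI) ⊗[ℤ] (S ⧸ NI) |
          ∃ (s : R) (r t a b : S), ((a : R) = α s * (r : R) * s) ∧
            ((b : R) = s * (t : R) * α s) ∧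
            z = (Ideal.Quotient.mk NI a) ⊗ₜ[ℤ] (Ideal.Quotient.mk NI t)
              - (Ideal.Quotient.mk NI r) ⊗ₜ[ℤ] (Ideal.Quotient.mk NI b)}) =
      SetLike.coe (Ideal.span
        {z : (S ⧸ NI) ⊗[ℤ] (S ⧸ NI) |
          ∃ (r : R) (c : S), ((c : R) = r * α r) ∧
            z = (Ideal.Quotient.mk NI c) ⊗ₜ[ℤ] (Ideal.Quotient.mk NI 1)
              - (Ideal.Quotient.mk NI 1) ⊗ₜ[ℤ] (Ideal.Quotient.mk NI c)}) := by
  have key : ∀ (c r t a b : S), a = c * r → b = c * t →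
      (Ideal.Quotient.mk NI a) ⊗ₜ[ℤ] (Ideal.Quotient.mk NI t)
        - (Ideal.Quotient.mk NI r) ⊗ₜ[ℤ] (Ideal.Quotient.mk NI b)
      = ((Ideal.Quotient.mk NI r) ⊗ₜ[ℤ] (Ideal.Quotient.mk NI t)) *
        ((Ideal.Quotient.mk NI c) ⊗ₜ[ℤ] (Ideal.Quotient.mk NI 1)
          - (Ideal.Quotient.mk NI 1) ⊗ₜ[ℤ] (Ideal.Quotient.mk NI c)) := by
    rintro c r t a b rfl rfl
    rw [mul_sub, Algebra.TensorProduct.tmul_mul_tmul, Algebra.TensorProduct.tmul_mul_tmul]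
    simp only [← map_mul, mul_one, mul_comm]
  ext z
  simp only [SetLike.mem_coe]
  constructor
  · intro hz
    induction hz using AddSubgroup.closure_induction with
    | mem x hx =>
      obtain ⟨s, r, t, a, b, ha, hb, rfl⟩ := hx
      have hc : s * α s ∈ S := by rw [hS, hmul, hinv]
      rw [key ⟨s * α s, hc⟩ r t a b (Subtype.ext (by rw [ha]; push_cast; ring))
        (Subtype.ext (by rw [hb]; push_cast; ring))]
      exact Ideal.mul_mem_left _ _ (Ideal.subset_span ⟨s, ⟨s * α s, hc⟩, rfl, rfl⟩)
    | zero => exact zero_mem _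
    | add x y _ _ hx hy => exact add_mem hx hy
    | neg x _ hx => exact neg_mem hx
  · intro hz
    induction hz using Submodule.span_induction with
    | mem x hx =>
      obtain ⟨r, c, hc, rfl⟩ := hx
      exact AddSubgroup.subset_closure ⟨r, 1, 1, c, c, by rw [hc]; push_cast; ring,
        by rw [hc]; push_cast; ring, rfl⟩
    | zero => exact zero_mem _
    | add x y _ _ hx hy => exact add_mem hx hy
    | smul y x hm hx =>
      clear hm
      rw [smul_eq_mul]
      induction hx using AddSubgroup.closure_induction with
      | mem x hx =>
        obtain ⟨s, r, t, a, b, ha, hb, rfl⟩ := hx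
        induction y using TensorProduct.induction_on with
        | zero => rw [zero_mul]; exact zero_mem _
        | add y y' h h' => rw [add_mul]; exact add_mem h h'
        | tmul u v =>
          obtain ⟨u, rfl⟩ := Ideal.Quotient.mk_surjective u
          obtain ⟨v, rfl⟩ := Ideal.Quotient.mk_surjective v
          refine AddSubgroup.subset_closure ⟨s, u * r, v * t, u * a, v * b, ?_, ?_, ?_⟩
          · push_cast; rw [ha]; ring
          · push_cast; rw [hb]; ring
          · rw [mul_sub, Algebra.TensorProduct.tmul_mul_tmul,
              Algebra.TensorProduct.tmul_mul_tmul]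
            simp only [map_mul]
      | zero => rw [mul_zero]; exact zero_mem _
      | add x x' _ _ h h' => rw [mul_add]; exact add_mem h h'
      | neg x _ h =>
        have e : y * -x = -(y * x) :=
          eq_neg_of_add_eq_zero_left (by rw [← mul_add, neg_add_cancel, mul_zero])
        rw [e]
        exact neg_mem h
end

section
/- Let A be an associative unital ring, let V : ℤ → A be an injective homomorphism of additive groups whose image has index 2 in the additive group of A (i.e., the quotient group A/V(ℤ) has exactly two elements), and let F : A → ℤ be a ring homomorphism such that F(V(n)) = 2n for all n ∈ ℤ. Then F is bijective. -/
/-- Let `A` be an associative unital ring, `V : ℤ → A` an injective additive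
group homomorphism whose image has index 2 (the quotient group `A / V(ℤ)` has exactly two
elements), and `F : A → ℤ` a ring homomorphism with `F (V n) = 2 n` for all `n`.  Then `F` is
bijective. -/
theorem ringHom_bijective_of_index_two {A : Type*} [Ring A]
    (V : ℤ →+ A) (hV : Function.Injective V)
    (hindex : Nat.card (A ⧸ V.range) = 2)
    (F : A →+* ℤ) (hFV : ∀ n : ℤ, F (V n) = 2 * n) :
    Function.Bijective F := by
  constructor
  · rw [injective_iff_map_eq_zero]
    intro a ha
    have h1 : (1 : A) ∉ V.range := by
      rintro ⟨n, hn⟩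
      have h := hFV n
      rw [hn, map_one] at h
      omega
    have key := AddSubgroup.add_mem_iff_of_index_two (H := V.range) hindex (a := a) (b := 1)
    by_cases hm : a ∈ V.range
    · obtain ⟨n, rfl⟩ := hm
      have h := hFV n
      rw [ha] at h
      have hn : n = 0 := by omega
      rw [hn, map_zero]
    · obtain ⟨n, hn⟩ := key.mpr (by tauto)
      have h := hFV n
      rw [hn, map_add, map_one, ha] at h
      omega
  · intro n
    exact ⟨(n : A), by simp⟩
end
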